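/- Fix constants δ₀, ρ₀ ∈ (0,1) and set α₀ = (1−ρ₀)(1−δ₀)²/ρ₀ and β₀ = (1−ρ₀)(1−δ₀)/ρ₀. Then there exists a constant C > 0 depending only on (δ₀, ρ₀) such that for every n ≥ 2 and every centered Gaussian vector X = (X_1,…,X_n) with var(X_i) = 1 for all i and correlation matrix R satisfying R_{ij} ≤ ρ₀ for all i ≠ j, one has P(max_{1≤i≤n} X_i ≤ δ₀ √(2(1−ρ₀)log n)) ≤ C · n^{−α₀} · (log n)^{(β₀−1)/2}. -/

import Mathlib

open MeasureTheory ProbabilityTheory Real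

/-- `X` is a centered Gaussian random vector with standardized entries and
correlation (= covariance) matrix `R`: every linear combination of the
coordinates is a centered real Gaussian with the corresponding variance,
and `R` has unit diagonal. -/
def IsCenteredGaussianVec {Ω : Type*} [MeasureSpace Ω] {n : ℕ}
    (X : Fin n → Ω → ℝ) (R : Matrix (Fin n) (Fin n) ℝ) : Prop :=
  (∀ i, Measurable (X i)) ∧ (∀ i, R i i = 1) ∧
    ∀ a : Fin n → ℝ,
      Measure.map (fun ω => ∑ i, a i * X i ω) (ℙ : Measure Ω) =
        gaussianReal 0 (Real.toNNReal (∑ i, ∑ j, a i * R i j * a j))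

/-!
By Slepian's inequality the probability is largest, among centered Gaussian vectors with unit
variances and correlations at most `ρ`, for the equicorrelated vector `√ρ Z + √(1 - ρ) Gᵢ`.
Slepian's inequality is Kahane's comparison: along the path `cos θ • X + sin θ • Y` between
independent vectors, Gaussian integration by parts gives
`d/dθ E f = sin θ cos θ ∑ᵢⱼ (Cov Yᵢⱼ - Cov Xᵢⱼ) E ∂ᵢ∂ⱼ f`, which is nonnegative when `f` is a
product of nonnegative decreasing functions of the coordinates.

Conditioning on `Z`, the probability for the equicorrelated vector is `E Φ(U) ^ n`, where `Φ` is the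
standard Gaussian distribution function, `U` has mean `δ a` and variance `v = ρ / (1 - ρ)`, and
`a = √(2 log n)`. For `u ≤ a` and any `m > 0`, the tail bound `1 - Φ(u) ≥ c φ(u) / a` gives
`Φ(u) ^ n ≲ a ^ m exp (m (u² - a²) / 2)`. The density of `U` decays near `a` at the exponential rate
`β a` with `β = (1 - δ) / v`, so choosing `β < m < 1 / v` makes `E Φ(U) ^ n` concentrate around
`a - log a / a`, with a total contribution of order `exp (-(1 - δ)² a² / (2 v)) a ^ (β - 1)`.
-/

open Filter Topology
open scoped NNReal ENNReal

section Stein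

variable {m : ℝ} {v : ℝ≥0}

lemma hasDerivAt_gaussianPDFReal (m : ℝ) (v : ℝ≥0) (x : ℝ) :
    HasDerivAt (gaussianPDFReal m v) (-((x - m) / v) * gaussianPDFReal m v x) x := by
  have hexponent : HasDerivAt (fun y : ℝ ↦ -(y - m) ^ 2 / (2 * v)) (-((x - m) / v)) x := by
    refine ((((hasDerivAt_id x).sub_const m).pow 2).neg.div_const (2 * (v : ℝ))).congr_deriv ?_
    simp only [id_eq, Nat.cast_ofNat, Nat.add_one_sub_one, pow_one, mul_one]
    rw [← mul_neg, mul_div_mul_left _ _ two_ne_zero, neg_div]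
  refine (hexponent.exp.const_mul (√(2 * π * v))⁻¹).congr_deriv ?_
  rw [gaussianPDFReal]
  ring

lemma integrable_gaussianReal_iff (hv : v ≠ 0) {f : ℝ → ℝ} :
    Integrable f (gaussianReal m v) ↔ Integrable fun x ↦ gaussianPDFReal m v x * f x := by
  rw [gaussianReal_of_var_ne_zero _ hv,
    integrable_withDensity_iff_integrable_smul' (measurable_gaussianPDF m v)
      (by simp [gaussianPDF_lt_top])]
  simp [toReal_gaussianPDF]

lemma integrable_sub_mul_gaussianReal {k : ℝ → ℝ} {B : ℝ}
    (hk : AEStronglyMeasurable k (gaussianReal m v)) (hB : ∀ x, |k x| ≤ B) :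
    Integrable (fun x ↦ (x - m) * k x) (gaussianReal m v) :=
  have hid : Integrable (fun x : ℝ ↦ x) (gaussianReal m v) :=
    memLp_one_iff_integrable.1 (memLp_id_gaussianReal' 1 (by simp))
  (hid.sub (integrable_const m)).mul_bdd (c := B) hk (.of_forall hB)

lemma integral_sub_mul_gaussianReal {k k' : ℝ → ℝ} (hderiv : ∀ x, HasDerivAt k (k' x) x)
    (hk : Integrable k (gaussianReal m v)) (hk' : Integrable k' (gaussianReal m v))
    (hxk : Integrable (fun x ↦ (x - m) * k x) (gaussianReal m v)) :
    ∫ x, (x - m) * k x ∂gaussianReal m v = v * ∫ x, k' x ∂gaussianReal m v := by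
  obtain rfl | hv := eq_or_ne v 0
  · simp
  have hv' : (v : ℝ) ≠ 0 := by exact_mod_cast hv
  rw [integrable_gaussianReal_iff hv] at hk hk' hxk
  have hxk_eq (x : ℝ) : (-((x - m) / v) * gaussianPDFReal m v x) * k x =
      -(v : ℝ)⁻¹ * (gaussianPDFReal m v x * ((x - m) * k x)) := by ring
  have hparts := integral_mul_deriv_eq_deriv_mul_of_integrable
    (fun x _ ↦ hasDerivAt_gaussianPDFReal m v x) (fun x _ ↦ hderiv x) hk'
    ((hxk.const_mul (-(v : ℝ)⁻¹)).congr (.of_forall fun x ↦ (hxk_eq x).symm)) hk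
  simp only [hxk_eq, integral_const_mul] at hparts
  simp only [integral_gaussianReal_eq_integral_smul hv, smul_eq_mul, hparts]
  field_simp

end Stein

/-- Bounded differentiable functions with bounded derivative: the test functions for Gaussian
integration by parts. The derivative is not required to be continuous. -/
structure BddDifferentiable {E : Type*} [NormedAddCommGroup E] [NormedSpace ℝ E]
    (f : E → ℝ) : Prop where
  differentiable : Differentiable ℝ f
  bdd : ∃ B, ∀ x, |f x| ≤ B
  bdd_fderiv : ∃ B, ∀ x, ‖fderiv ℝ f x‖ ≤ B

namespace BddDifferentiable

variable {E F : Type*} [NormedAddCommGroup E] [NormedSpace ℝ E]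
  [NormedAddCommGroup F] [NormedSpace ℝ F] {f g : E → ℝ}

lemma const (a : ℝ) : BddDifferentiable fun _ : E ↦ a where
  differentiable := differentiable_const a
  bdd := ⟨|a|, fun _ ↦ le_rfl⟩
  bdd_fderiv := ⟨0, by simp⟩

lemma sub (hf : BddDifferentiable f) (hg : BddDifferentiable g) :
    BddDifferentiable fun x ↦ f x - g x := by
  obtain ⟨A, hA⟩ := hf.bdd
  obtain ⟨A', hA'⟩ := hf.bdd_fderiv
  obtain ⟨B, hB⟩ := hg.bdd
  obtain ⟨B', hB'⟩ := hg.bdd_fderiv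
  refine ⟨hf.differentiable.fun_sub hg.differentiable,
    ⟨A + B, fun x ↦ (abs_sub _ _).trans (add_le_add (hA x) (hB x))⟩, ⟨A' + B', fun x ↦ ?_⟩⟩
  rw [fderiv_fun_sub (hf.differentiable x) (hg.differentiable x)]
  exact (norm_sub_le _ _).trans (add_le_add (hA' x) (hB' x))

lemma mul (hf : BddDifferentiable f) (hg : BddDifferentiable g) :
    BddDifferentiable fun x ↦ f x * g x := by
  obtain ⟨A, hA⟩ := hf.bdd
  obtain ⟨A', hA'⟩ := hf.bdd_fderiv
  obtain ⟨B, hB⟩ := hg.bdd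
  obtain ⟨B', hB'⟩ := hg.bdd_fderiv
  refine ⟨hf.differentiable.fun_mul hg.differentiable, ⟨A * B, fun x ↦ ?_⟩,
    ⟨A * B' + B * A', fun x ↦ ?_⟩⟩
  · rw [abs_mul]
    exact mul_le_mul (hA x) (hB x) (abs_nonneg _) ((abs_nonneg _).trans (hA x))
  · rw [fderiv_fun_mul (hf.differentiable x) (hg.differentiable x)]
    refine (norm_add_le _ _).trans (add_le_add ?_ ?_)
    · rw [norm_smul]
      exact mul_le_mul (hA x) (hB' x) (norm_nonneg _) ((abs_nonneg _).trans (hA x))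
    · rw [norm_smul]
      exact mul_le_mul (hB x) (hA' x) (norm_nonneg _) ((abs_nonneg _).trans (hB x))

lemma prod {ι : Type*} {s : Finset ι} {q : ι → E → ℝ} (hq : ∀ i ∈ s, BddDifferentiable (q i)) :
    BddDifferentiable fun x ↦ ∏ i ∈ s, q i x := by
  induction s using Finset.cons_induction with
  | empty => simpa using const (E := E) 1
  | cons i s hi ih =>
    simp only [Finset.prod_cons]
    exact (hq i (Finset.mem_cons_self i s)).mul (ih fun j hj ↦ hq j (Finset.mem_cons_of_mem hj))

lemma comp_continuousLinearMap {f : F → ℝ} (hf : BddDifferentiable f) (L : E →L[ℝ] F) :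
    BddDifferentiable fun x ↦ f (L x) := by
  obtain ⟨A, hA⟩ := hf.bdd
  obtain ⟨A', hA'⟩ := hf.bdd_fderiv
  refine ⟨hf.differentiable.comp L.differentiable, ⟨A, fun x ↦ hA (L x)⟩, ⟨A' * ‖L‖, fun x ↦ ?_⟩⟩
  have hchain : fderiv ℝ (fun x ↦ f (L x)) x = (fderiv ℝ f (L x)).comp L :=
    ((hf.differentiable (L x)).hasFDerivAt.comp x L.hasFDerivAt).fderiv
  rw [hchain]
  exact (ContinuousLinearMap.opNorm_comp_le _ L).trans
    (mul_le_mul_of_nonneg_right (hA' _) (norm_nonneg L))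

lemma exists_abs_fderiv_apply_le (hf : BddDifferentiable f) (y : E) :
    ∃ B, ∀ x, |fderiv ℝ f x y| ≤ B :=
  have ⟨B, hB⟩ := hf.bdd_fderiv
  ⟨B * ‖y‖, fun x ↦ (fderiv ℝ f x).le_of_opNorm_le (hB x) y⟩

variable [MeasurableSpace E] [OpensMeasurableSpace E] {Ω : Type*} [MeasurableSpace Ω]
  {μ : Measure Ω} [IsFiniteMeasure μ] {Z : Ω → E}

lemma integrable_comp (hf : BddDifferentiable f) (hZ : AEMeasurable Z μ) :
    Integrable (fun ω ↦ f (Z ω)) μ :=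
  have ⟨B, hB⟩ := hf.bdd
  .of_bound (hf.differentiable.continuous.measurable.comp_aemeasurable hZ).aestronglyMeasurable B
    (.of_forall fun _ ↦ hB _)

lemma integrable_fderiv_apply_comp (hf : BddDifferentiable f) (hZ : AEMeasurable Z μ) (y : E) :
    Integrable (fun ω ↦ fderiv ℝ f (Z ω) y) μ :=
  have ⟨B, hB⟩ := hf.exists_abs_fderiv_apply_le y
  .of_bound ((measurable_fderiv_apply_const ℝ f y).comp_aemeasurable hZ).aestronglyMeasurable B
    (.of_forall fun _ ↦ hB _)

end BddDifferentiable

section IntegrationByParts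

variable {E : Type*} [NormedAddCommGroup E] [NormedSpace ℝ E] [MeasurableSpace E] [BorelSpace E]
  [SecondCountableTopology E]

lemma integral_prod_sub_mul_gaussianReal {m : ℝ} {v : ℝ≥0} {κ : Measure E} [IsFiniteMeasure κ]
    {h : E → ℝ} (hh : BddDifferentiable h) (c : E) :
    ∫ p, (p.1 - m) * h (p.1 • c + p.2) ∂(gaussianReal m v).prod κ =
      v * ∫ p, fderiv ℝ h (p.1 • c + p.2) c ∂(gaussianReal m v).prod κ := by
  obtain ⟨B, hB⟩ := hh.bdd
  have hstein (w : E) : ∫ x, (x - m) * h (x • c + w) ∂gaussianReal m v =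
      v * ∫ x, fderiv ℝ h (x • c + w) c ∂gaussianReal m v := by
    refine integral_sub_mul_gaussianReal (fun x ↦ ?_) ?_ ?_ ?_
    · have hline : HasDerivAt (fun x : ℝ ↦ x • c + w) c x := by
        simpa using ((hasDerivAt_id x).smul_const c).add_const w
      exact (hh.differentiable _).hasFDerivAt.comp_hasDerivAt x hline
    · exact hh.integrable_comp (by fun_prop)
    · exact hh.integrable_fderiv_apply_comp (by fun_prop) c
    · exact integrable_sub_mul_gaussianReal (hh.integrable_comp (by fun_prop)).1 fun x ↦ hB _
  have hid : Integrable (fun p : ℝ × E ↦ p.1 - m) ((gaussianReal m v).prod κ) := by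
    simpa using (integrable_sub_mul_gaussianReal (k := fun _ ↦ 1) (B := 1)
      (by fun_prop) (by simp)).comp_fst κ
  rw [integral_prod_symm, integral_prod_symm]
  · simp only [hstein, integral_const_mul]
  · exact hh.integrable_fderiv_apply_comp (by fun_prop) c
  · exact hid.mul_bdd (c := B) (hh.integrable_comp (by fun_prop)).1 (.of_forall fun p ↦ hB _)

variable {Ω ι : Type*} [MeasurableSpace Ω] {P : Measure Ω} {U : Ω → ℝ} {Z : Ω → ι → ℝ}

/-- The coefficients of the linear regression of the coordinates of `Z` on `U`. They are zero when
`U` has variance zero, because of `x / 0 = 0`. -/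
noncomputable def regressionCoeff (U : Ω → ℝ) (Z : Ω → ι → ℝ) (P : Measure Ω) (j : ι) : ℝ :=
  cov[U, fun ω ↦ Z ω j; P] / Var[U; P]

lemma variance_mul_regressionCoeff [IsProbabilityMeasure P] (hU : MemLp U 2 P) (j : ι) :
    Var[U; P] * regressionCoeff U Z P j = cov[U, fun ω ↦ Z ω j; P] := by
  refine mul_div_cancel_of_imp' fun hvar ↦ integral_eq_zero_of_ae ?_
  filter_upwards [ae_eq_integral_of_variance_eq_zero hU hvar] with ω hω
  simp [hω]

lemma indepFun_sub_regressionCoeff [Finite ι] (hUZ : HasGaussianLaw (fun ω ↦ (U ω, Z ω)) P) :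
    IndepFun U (fun ω ↦ Z ω - U ω • regressionCoeff U Z P) P := by
  have := Fintype.ofFinite ι
  have := hUZ.isProbabilityMeasure
  have hU : MemLp U 2 P := hUZ.fst.memLp_two
  let L : (ℝ × (ι → ℝ)) →L[ℝ] (Unit → ℝ) × (ι → ℝ) :=
    (ContinuousLinearMap.pi fun _ ↦ ContinuousLinearMap.fst ℝ ℝ (ι → ℝ)).prod
      (ContinuousLinearMap.snd ℝ ℝ (ι → ℝ) -
        (ContinuousLinearMap.fst ℝ ℝ (ι → ℝ)).smulRight (regressionCoeff U Z P))
  have hpair : HasGaussianLaw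
      (fun ω ↦ ((fun _ : Unit ↦ U ω), fun j ↦ Z ω j - U ω * regressionCoeff U Z P j)) P :=
    hUZ.map_fun L
  refine (hpair.indepFun_of_covariance_eval (X := fun _ ↦ U)
    (Y := fun j ω ↦ Z ω j - U ω * regressionCoeff U Z P j) fun _ j ↦ ?_).comp
    (φ := fun u : Unit → ℝ ↦ u ()) (ψ := id) (measurable_pi_apply _) measurable_id
  rw [covariance_fun_sub_right hU (hUZ.snd.eval j).memLp_two (hU.mul_const _),
    covariance_mul_const_right, covariance_self hU.aemeasurable, variance_mul_regressionCoeff hU,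
    sub_self]

theorem integral_sub_mul_of_hasGaussianLaw [Fintype ι]
    (hUZ : HasGaussianLaw (fun ω ↦ (U ω, Z ω)) P) {h : (ι → ℝ) → ℝ} (hh : BddDifferentiable h) :
    ∫ ω, (U ω - P[U]) * h (Z ω) ∂P =
      ∫ ω, fderiv ℝ h (Z ω) (fun j ↦ cov[U, fun ω ↦ Z ω j; P]) ∂P := by
  have := hUZ.isProbabilityMeasure
  have hU : MemLp U 2 P := hUZ.fst.memLp_two
  set c := regressionCoeff U Z P
  set W : Ω → ι → ℝ := fun ω ↦ Z ω - U ω • c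
  have hUm : AEMeasurable U P := hUZ.fst.aemeasurable
  have hWm : AEMeasurable W P := hUZ.snd.aemeasurable.sub (hUm.smul_const c)
  have hlaw : P.map (fun ω ↦ (U ω, W ω)) =
      (gaussianReal P[U] Var[U; P].toNNReal).prod (P.map W) := by
    rw [(indepFun_iff_map_prod_eq_prod_map_map hUm hWm).1 (indepFun_sub_regressionCoeff hUZ),
      hUZ.fst.map_eq_gaussianReal]
  have hZ (ω : Ω) : Z ω = U ω • c + W ω := by simp [W]
  have hc : (fun j ↦ cov[U, fun ω ↦ Z ω j; P]) = Var[U; P] • c :=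
    funext fun j ↦ (variance_mul_regressionCoeff hU j).symm
  have hstein := integral_prod_sub_mul_gaussianReal (m := P[U]) (v := Var[U; P].toNNReal)
    (κ := P.map W) hh c
  have hcont : Continuous h := hh.differentiable.continuous
  rw [← hlaw, integral_map (hUm.prodMk hWm) (by fun_prop), integral_map (hUm.prodMk hWm)
    (hh.integrable_fderiv_apply_comp (by fun_prop) c).1,
    Real.coe_toNNReal _ (variance_nonneg U P)] at hstein
  simpa only [hc, map_smul, smul_eq_mul, integral_const_mul, ← hZ] using hstein

end IntegrationByParts

section Covariance

lemma covariance_comp_measurePreserving {Ω Ω' : Type*} [MeasurableSpace Ω] [MeasurableSpace Ω']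
    {P : Measure Ω} {μ : Measure Ω'} {g : Ω → Ω'} (hg : MeasurePreserving g P μ) {X Y : Ω' → ℝ}
    (hX : AEStronglyMeasurable X μ) (hY : AEStronglyMeasurable Y μ) :
    cov[fun ω ↦ X (g ω), fun ω ↦ Y (g ω); P] = cov[X, Y; μ] := by
  rw [← hg.map_eq] at hX hY ⊢
  exact (covariance_map_fun hX hY hg.aemeasurable).symm

lemma covariance_prod_const_mul_add {Ω Ω' : Type*} [MeasurableSpace Ω] [MeasurableSpace Ω']
    {μ : Measure Ω} {ν : Measure Ω'} [IsProbabilityMeasure μ] [IsProbabilityMeasure ν]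
    {X X' : Ω → ℝ} {Y Y' : Ω' → ℝ} (hX : MemLp X 2 μ) (hX' : MemLp X' 2 μ) (hY : MemLp Y 2 ν)
    (hY' : MemLp Y' 2 ν) (a b a' b' : ℝ) :
    cov[fun p ↦ a * X p.1 + b * Y p.2, fun p ↦ a' * X' p.1 + b' * Y' p.2; μ.prod ν] =
      a * a' * cov[X, X'; μ] + b * b' * cov[Y, Y'; ν] := by
  have hfst {f : Ω → ℝ} (hf : MemLp f 2 μ) (r : ℝ) :
      MemLp (fun p : Ω × Ω' ↦ r * f p.1) 2 (μ.prod ν) := (hf.comp_fst ν).const_mul r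
  have hsnd {f : Ω' → ℝ} (hf : MemLp f 2 ν) (r : ℝ) :
      MemLp (fun p : Ω × Ω' ↦ r * f p.2) 2 (μ.prod ν) := (hf.comp_snd μ).const_mul r
  change cov[(fun p ↦ a * X p.1) + fun p ↦ b * Y p.2,
    (fun p ↦ a' * X' p.1) + fun p ↦ b' * Y' p.2; μ.prod ν] = _
  rw [covariance_add_left (hfst hX a) (hsnd hY b) ((hfst hX' a').add (hsnd hY' b')),
    covariance_add_right (hfst hX a) (hfst hX' a') (hsnd hY' b'),
    covariance_add_right (hsnd hY b) (hfst hX' a') (hsnd hY' b')]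
  simp only [covariance_const_mul_left, covariance_const_mul_right,
    covariance_comp_measurePreserving measurePreserving_fst hX.1 hX'.1,
    covariance_comp_measurePreserving measurePreserving_snd hY.1 hY'.1,
    covariance_fst_snd_prod hX hY', covariance_comm (fun p : Ω × Ω' ↦ Y p.2) fun p ↦ X' p.1,
    covariance_fst_snd_prod hX' hY]
  ring

variable {ι : Type*}

/-- The covariance matrix of a measure on `ι → ℝ`, that is, of the coordinate functions under it. -/
noncomputable def coordCov (μ : Measure (ι → ℝ)) (i j : ι) : ℝ :=
  cov[fun x ↦ x i, fun x ↦ x j; μ]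

lemma memLp_two_eval_of_isGaussian [Finite ι] (μ : Measure (ι → ℝ)) [IsGaussian μ] (i : ι) :
    MemLp (fun x ↦ x i) 2 μ :=
  have := Fintype.ofFinite ι
  (IsGaussian.hasGaussianLaw_id.eval i).memLp_two

end Covariance

section TrigPath

variable {E : Type*} [NormedAddCommGroup E] [NormedSpace ℝ E]

/-- The path `cos θ • x + sin θ • y` joining `x` (at `θ = 0`) to `y` (at `θ = π / 2`). Its velocity
at `θ` is its value at `θ + π / 2`. -/
noncomputable def trigPath (θ : ℝ) : E × E →L[ℝ] E :=
  cos θ • ContinuousLinearMap.fst ℝ E E + sin θ • ContinuousLinearMap.snd ℝ E E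

lemma trigPath_apply (θ : ℝ) (p : E × E) : trigPath θ p = cos θ • p.1 + sin θ • p.2 := rfl

lemma hasDerivAt_trigPath (p : E × E) (θ : ℝ) :
    HasDerivAt (fun θ ↦ trigPath θ p) (trigPath (θ + π / 2) p) θ := by
  simpa only [trigPath_apply, cos_add_pi_div_two, sin_add_pi_div_two] using
    ((hasDerivAt_cos θ).smul_const p.1).fun_add ((hasDerivAt_sin θ).smul_const p.2)

lemma norm_trigPath_le (θ : ℝ) (p : E × E) : ‖trigPath θ p‖ ≤ ‖p.1‖ + ‖p.2‖ := by
  refine (norm_add_le _ _).trans (add_le_add ?_ ?_)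
  · exact (norm_smul_le _ _).trans (mul_le_of_le_one_left (norm_nonneg _) (abs_cos_le_one θ))
  · exact (norm_smul_le _ _).trans (mul_le_of_le_one_left (norm_nonneg _) (abs_sin_le_one θ))

variable [FiniteDimensional ℝ E] [MeasurableSpace E] [BorelSpace E]

lemma hasDerivAt_integral_trigPath {κ : Measure (E × E)} [IsFiniteMeasure κ]
    (hκ : Integrable id κ) {f : E → ℝ} (hf : BddDifferentiable f) (θ : ℝ) :
    HasDerivAt (fun θ ↦ ∫ p, f (trigPath θ p) ∂κ)
      (∫ p, fderiv ℝ f (trigPath θ p) (trigPath (θ + π / 2) p) ∂κ) θ := by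
  obtain ⟨B, hB⟩ := hf.bdd_fderiv
  have : ProperSpace E := FiniteDimensional.proper_real E
  have hrot (θ : ℝ) : Measurable (trigPath (E := E) θ) := (trigPath θ).continuous.measurable
  refine (hasDerivAt_integral_of_dominated_loc_of_deriv_le (s := Set.univ)
    (F' := fun θ p ↦ fderiv ℝ f (trigPath θ p) (trigPath (θ + π / 2) p))
    (bound := fun p ↦ B * (‖p.1‖ + ‖p.2‖)) univ_mem ?_ ?_ ?_ ?_ ?_ ?_).2
  · exact .of_forall fun θ ↦ (hf.integrable_comp (hrot θ).aemeasurable).1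
  · exact hf.integrable_comp (hrot θ).aemeasurable
  · exact (ContinuousLinearMap.measurable_apply₂.comp
      (((measurable_fderiv ℝ f).comp (hrot θ)).prodMk (hrot (θ + π / 2)))).aestronglyMeasurable
  · exact .of_forall fun p θ _ ↦ ((fderiv ℝ f _).le_of_opNorm_le (hB _) _).trans
      (mul_le_mul_of_nonneg_left (norm_trigPath_le _ p) ((norm_nonneg _).trans (hB 0)))
  · exact (hκ.fst.norm.add hκ.snd.norm).const_mul B
  · exact .of_forall fun p θ _ ↦
      (hf.differentiable _).hasFDerivAt.comp_hasDerivAt θ (hasDerivAt_trigPath p θ)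

end TrigPath

section Kahane

variable {ι : Type*} [Fintype ι] {μ ν : Measure (ι → ℝ)} [IsGaussian μ] [IsGaussian ν]

lemma hasGaussianLaw_trigPath (θ φ : ℝ) (i : ι) :
    HasGaussianLaw (fun p : (ι → ℝ) × (ι → ℝ) ↦ (trigPath φ p i, trigPath θ p)) (μ.prod ν) := by
  let L : (ι → ℝ) × (ι → ℝ) →L[ℝ] ℝ × (ι → ℝ) :=
    ((ContinuousLinearMap.proj (φ := fun _ ↦ ℝ) i).comp (trigPath φ)).prod (trigPath θ)
  exact IsGaussian.hasGaussianLaw_id.map_fun L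

lemma covariance_trigPath (θ φ : ℝ) (i j : ι) :
    cov[fun p : (ι → ℝ) × (ι → ℝ) ↦ trigPath θ p i, fun p ↦ trigPath φ p j; μ.prod ν] =
      cos θ * cos φ * coordCov μ i j + sin θ * sin φ * coordCov ν i j :=
  covariance_prod_const_mul_add (memLp_two_eval_of_isGaussian μ i)
    (memLp_two_eval_of_isGaussian μ j) (memLp_two_eval_of_isGaussian ν i)
    (memLp_two_eval_of_isGaussian ν j) ..

lemma integral_trigPath_eq_zero (hμ : ∀ i, ∫ x, x i ∂μ = 0) (hν : ∀ i, ∫ x, x i ∂ν = 0)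
    (θ : ℝ) (i : ι) : ∫ p : (ι → ℝ) × (ι → ℝ), trigPath θ p i ∂μ.prod ν = 0 := by
  have hμi := ((memLp_two_eval_of_isGaussian μ i).integrable one_le_two).comp_fst ν
  have hνi := ((memLp_two_eval_of_isGaussian ν i).integrable one_le_two).comp_snd μ
  simp only [trigPath_apply, Pi.add_apply, Pi.smul_apply, smul_eq_mul]
  rw [integral_add (hμi.const_mul _) (hνi.const_mul _)]
  simp [integral_const_mul, integral_fun_fst (f := fun x : ι → ℝ ↦ x i),
    integral_fun_snd (f := fun x : ι → ℝ ↦ x i), hμ, hν]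

lemma integral_trigPath_mul (hμ : ∀ i, ∫ x, x i ∂μ = 0) (hν : ∀ i, ∫ x, x i ∂ν = 0)
    {h : (ι → ℝ) → ℝ} (hh : BddDifferentiable h) (θ : ℝ) (i : ι) :
    ∫ p, trigPath (θ + π / 2) p i * h (trigPath θ p) ∂μ.prod ν =
      ∫ p, fderiv ℝ h (trigPath θ p)
        (fun j ↦ sin θ * cos θ * (coordCov ν i j - coordCov μ i j)) ∂μ.prod ν := by
  have hcov (j : ι) : cov[fun p : (ι → ℝ) × (ι → ℝ) ↦ trigPath (θ + π / 2) p i,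
      fun p ↦ trigPath θ p j; μ.prod ν] =
        sin θ * cos θ * (coordCov ν i j - coordCov μ i j) := by
    rw [covariance_trigPath, cos_add_pi_div_two, sin_add_pi_div_two]
    ring
  have hlaw := hasGaussianLaw_trigPath (μ := μ) (ν := ν) θ (θ + π / 2) i
  simpa only [integral_trigPath_eq_zero hμ hν, sub_zero, hcov] using
    integral_sub_mul_of_hasGaussianLaw hlaw hh

variable [DecidableEq ι]

lemma apply_eq_sum_mul_apply_single (L : (ι → ℝ) →L[ℝ] ℝ) (x : ι → ℝ) :
    L x = ∑ i, x i * L (Pi.single i 1) := by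
  conv_lhs => rw [← Finset.univ_sum_single x, map_sum]
  refine Finset.sum_congr rfl fun i _ ↦ ?_
  rw [← smul_eq_mul, ← map_smul, ← Pi.single_smul, smul_eq_mul, mul_one]

/-- The partial derivative `∂ᵢ f` of a function on `ι → ℝ`. -/
noncomputable def partialDeriv (i : ι) (f : (ι → ℝ) → ℝ) (z : ι → ℝ) : ℝ :=
  fderiv ℝ f z (Pi.single i 1)

lemma fderiv_apply_eq_sum_partialDeriv (f : (ι → ℝ) → ℝ) (z u : ι → ℝ) :
    fderiv ℝ f z u = ∑ i, u i * partialDeriv i f z :=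
  apply_eq_sum_mul_apply_single _ u

lemma integral_fderiv_trigPath (hμ : ∀ i, ∫ x, x i ∂μ = 0) (hν : ∀ i, ∫ x, x i ∂ν = 0)
    {f : (ι → ℝ) → ℝ} (hf' : ∀ i, BddDifferentiable (partialDeriv i f)) (θ : ℝ) :
    ∫ p, fderiv ℝ f (trigPath θ p) (trigPath (θ + π / 2) p) ∂μ.prod ν =
      ∑ i, ∑ j, sin θ * cos θ * (coordCov ν i j - coordCov μ i j) *
        ∫ p, partialDeriv j (partialDeriv i f) (trigPath θ p) ∂μ.prod ν := by
  have hpath : AEMeasurable (trigPath (E := ι → ℝ) θ) (μ.prod ν) := by fun_prop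
  simp only [fderiv_apply_eq_sum_partialDeriv f]
  rw [integral_finsetSum _ fun i _ ↦ ?_]
  · refine Finset.sum_congr rfl fun i _ ↦ ?_
    simp only [integral_trigPath_mul hμ hν (hf' i),
      fderiv_apply_eq_sum_partialDeriv (partialDeriv i f)]
    rw [integral_finsetSum _ fun j _ ↦ ?_]
    · simp only [integral_const_mul]
    · exact ((hf' i).integrable_fderiv_apply_comp hpath _).const_mul _
  · obtain ⟨B, hB⟩ := (hf' i).bdd
    exact (hasGaussianLaw_trigPath θ (θ + π / 2) i).fst.integrable.mul_bdd (c := B)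
      ((hf' i).integrable_comp hpath).1 (.of_forall fun p ↦ hB _)

theorem integral_le_integral_of_partialDeriv_mul_nonneg (hμ : ∀ i, ∫ x, x i ∂μ = 0)
    (hν : ∀ i, ∫ x, x i ∂ν = 0) {f : (ι → ℝ) → ℝ} (hf : BddDifferentiable f)
    (hf' : ∀ i, BddDifferentiable (partialDeriv i f))
    (hnonneg : ∀ i j z,
      0 ≤ (coordCov ν i j - coordCov μ i j) * partialDeriv j (partialDeriv i f) z) :
    ∫ x, f x ∂μ ≤ ∫ x, f x ∂ν := by
  have hderiv := hasDerivAt_integral_trigPath (κ := μ.prod ν) IsGaussian.integrable_id hf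
  have hmono : MonotoneOn (fun θ ↦ ∫ p, f (trigPath θ p) ∂μ.prod ν) (Set.Icc 0 (π / 2)) := by
    refine monotoneOn_of_deriv_nonneg (convex_Icc _ _)
      (fun θ _ ↦ (hderiv θ).continuousAt.continuousWithinAt)
      (fun θ _ ↦ (hderiv θ).differentiableAt.differentiableWithinAt) fun θ hθ ↦ ?_
    have hθ' : θ ∈ Set.Icc 0 (π / 2) := interior_subset hθ
    have hsin : 0 ≤ sin θ := sin_nonneg_of_nonneg_of_le_pi hθ'.1 (by linarith [hθ'.2, pi_pos])
    have hcos : 0 ≤ cos θ :=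
      cos_nonneg_of_neg_pi_div_two_le_of_le (by linarith [hθ'.1, pi_pos]) hθ'.2
    rw [(hderiv θ).deriv, integral_fderiv_trigPath hμ hν hf']
    refine Finset.sum_nonneg fun i _ ↦ Finset.sum_nonneg fun j _ ↦ ?_
    rw [mul_assoc, ← integral_const_mul]
    exact mul_nonneg (mul_nonneg hsin hcos) (integral_nonneg fun p ↦ hnonneg i j _)
  have hends := hmono (Set.left_mem_Icc.2 (by positivity)) (Set.right_mem_Icc.2 (by positivity))
    (show (0 : ℝ) ≤ π / 2 by positivity)
  simpa [trigPath_apply, integral_fun_fst, integral_fun_snd] using hends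

end Kahane

section ProductFunctions

variable {ι : Type*} [Fintype ι] {q : ι → ℝ → ℝ}

lemma BddDifferentiable.prod_eval (hq : ∀ i, BddDifferentiable (q i)) :
    BddDifferentiable fun z : ι → ℝ ↦ ∏ i, q i (z i) :=
  .prod fun i _ ↦ (hq i).comp_continuousLinearMap (ContinuousLinearMap.proj (φ := fun _ ↦ ℝ) i)

lemma prod_update_apply [DecidableEq ι] (q : ι → ℝ → ℝ) (i : ι) (g : ℝ → ℝ) (z : ι → ℝ) :
    ∏ k, Function.update q i g k (z k) = g (z i) * ∏ k ∈ Finset.univ.erase i, q k (z k) := by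
  simp only [Function.apply_update (fun k (φ : ℝ → ℝ) ↦ φ (z k)),
    Finset.prod_update_of_mem (Finset.mem_univ i), Finset.sdiff_singleton_eq_erase]

lemma partialDeriv_prod_eval [DecidableEq ι] (hq : ∀ i, Differentiable ℝ (q i)) (i : ι) :
    partialDeriv i (fun z ↦ ∏ k, q k (z k)) =
      fun z ↦ ∏ k, Function.update q i (deriv (q i)) k (z k) := by
  ext z
  have hdiff : Differentiable ℝ fun z : ι → ℝ ↦ ∏ k, q k (z k) := by fun_prop
  have hslice : (fun t ↦ ∏ k, q k (Function.update z i t k)) =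
      fun t ↦ q i t * ∏ k ∈ Finset.univ.erase i, q k (z k) := by
    simp only [Function.apply_update q, Finset.prod_update_of_mem (Finset.mem_univ i),
      Finset.sdiff_singleton_eq_erase]
  have hchain := (hdiff (Function.update z i (z i))).hasFDerivAt.comp_hasDerivAt (z i)
    (hasDerivAt_update z i (z i))
  rw [Function.update_eq_self] at hchain
  rw [prod_update_apply, partialDeriv, ← hchain.deriv]
  exact (congrArg (deriv · (z i)) hslice).trans
    (((hq i (z i)).hasDerivAt.mul_const _).deriv)

lemma partialDeriv_partialDeriv_prod_eval_nonneg [DecidableEq ι] (hq : ∀ i, Differentiable ℝ (q i))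
    (hq' : ∀ i, Differentiable ℝ (deriv (q i))) (hnonneg : ∀ i x, 0 ≤ q i x)
    (hanti : ∀ i, Antitone (q i)) {i j : ι} (hij : i ≠ j) (z : ι → ℝ) :
    0 ≤ partialDeriv j (partialDeriv i fun z ↦ ∏ k, q k (z k)) z := by
  have hupdate (k : ι) : Differentiable ℝ (Function.update q i (deriv (q i)) k) := by
    obtain rfl | hk := eq_or_ne k i
    · simpa using hq' k
    · simpa [hk] using hq k
  have hi : i ∈ Finset.univ.erase j := Finset.mem_erase.2 ⟨hij, Finset.mem_univ i⟩
  rw [partialDeriv_prod_eval hq, partialDeriv_prod_eval hupdate]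
  beta_reduce
  rw [prod_update_apply, Function.update_of_ne hij.symm, ← Finset.mul_prod_erase _ _ hi,
    Function.update_self, ← mul_assoc]
  refine mul_nonneg (mul_nonneg_of_nonpos_of_nonpos (hanti j).deriv_nonpos (hanti i).deriv_nonpos)
    (Finset.prod_nonneg fun k hk ↦ ?_)
  rw [Function.update_of_ne (Finset.ne_of_mem_erase hk)]
  exact hnonneg k _

theorem integral_prod_eval_le_of_coordCov_le {μ ν : Measure (ι → ℝ)} [IsGaussian μ] [IsGaussian ν]
    (hμ : ∀ i, ∫ x, x i ∂μ = 0) (hν : ∀ i, ∫ x, x i ∂ν = 0)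
    (hdiag : ∀ i, coordCov μ i i = coordCov ν i i)
    (hoff : ∀ i j, i ≠ j → coordCov μ i j ≤ coordCov ν i j)
    (hq : ∀ i, BddDifferentiable (q i)) (hq' : ∀ i, BddDifferentiable (deriv (q i)))
    (hnonneg : ∀ i x, 0 ≤ q i x) (hanti : ∀ i, Antitone (q i)) :
    ∫ x, ∏ i, q i (x i) ∂μ ≤ ∫ x, ∏ i, q i (x i) ∂ν := by
  classical
  refine integral_le_integral_of_partialDeriv_mul_nonneg hμ hν (.prod_eval hq) (fun i ↦ ?_)
    fun i j z ↦ ?_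
  · rw [partialDeriv_prod_eval fun k ↦ (hq k).differentiable]
    refine .prod_eval fun k ↦ ?_
    obtain rfl | hk := eq_or_ne k i
    · simpa using hq' k
    · simpa [hk] using hq k
  · obtain rfl | hij := eq_or_ne i j
    · simp [hdiag]
    · exact mul_nonneg (sub_nonneg.2 (hoff i j hij))
        (partialDeriv_partialDeriv_prod_eval_nonneg (fun k ↦ (hq k).differentiable)
          (fun k ↦ (hq' k).differentiable) hnonneg hanti hij z)

end ProductFunctions

section SmoothStep

/-- Smooth decreasing approximations of the indicator of `Set.Iic t`. The inner `+ 1` makes them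
converge to `1` at `t` itself, so that no mass at `t` has to be excluded. -/
noncomputable def smoothStep (k : ℕ) (t x : ℝ) : ℝ :=
  sigmoid (k * (k * (t - x) + 1))

lemma smoothStep_nonneg (k : ℕ) (t x : ℝ) : 0 ≤ smoothStep k t x := sigmoid_nonneg _

lemma smoothStep_le_one (k : ℕ) (t x : ℝ) : smoothStep k t x ≤ 1 := sigmoid_le_one _

lemma smoothStep_antitone (k : ℕ) (t : ℝ) : Antitone (smoothStep k t) := by
  intro x y hxy
  unfold smoothStep
  gcongr

lemma tendsto_smoothStep (t x : ℝ) :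
    Tendsto (fun k ↦ smoothStep k t x) atTop (𝓝 ((Set.Iic t).indicator 1 x)) := by
  have hk : Tendsto (fun k : ℕ ↦ (k : ℝ)) atTop atTop := tendsto_natCast_atTop_atTop
  obtain hx | hx := le_or_gt x t
  · rw [Set.indicator_of_mem (Set.mem_Iic.2 hx)]
    refine tendsto_sigmoid_atTop.comp (tendsto_atTop_mono (fun k ↦ ?_) hk)
    exact le_mul_of_one_le_right k.cast_nonneg
      (le_add_of_nonneg_left (mul_nonneg k.cast_nonneg (sub_nonneg.2 hx)))
  · rw [Set.indicator_of_notMem (by simpa using hx)]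
    exact tendsto_sigmoid_atBot.comp (hk.atTop_mul_atBot₀
      (tendsto_atBot_add_const_right _ 1 (hk.atTop_mul_const_of_neg (sub_neg.2 hx))))

lemma hasDerivAt_smoothStep (k : ℕ) (t x : ℝ) :
    HasDerivAt (smoothStep k t) (-k ^ 2 * (smoothStep k t x * (1 - smoothStep k t x))) x := by
  have hinner : HasDerivAt (fun x ↦ (k : ℝ) * (k * (t - x) + 1)) (-k ^ 2) x := by
    refine (((((hasDerivAt_id x).const_sub t).const_mul (k : ℝ)).add_const 1).const_mul
      (k : ℝ)).congr_deriv ?_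
    ring
  exact ((hasDerivAt_sigmoid _).comp x hinner).congr_deriv (mul_comm _ _)

lemma bddDifferentiable_smoothStep (k : ℕ) (t : ℝ) : BddDifferentiable (smoothStep k t) := by
  refine ⟨fun x ↦ (hasDerivAt_smoothStep k t x).differentiableAt, ⟨1, fun x ↦ ?_⟩,
    ⟨k ^ 2, fun x ↦ ?_⟩⟩
  · rw [abs_of_nonneg (smoothStep_nonneg k t x)]
    exact smoothStep_le_one k t x
  · have h0 := smoothStep_nonneg k t x
    have h1 := smoothStep_le_one k t x
    have hprod : smoothStep k t x * (1 - smoothStep k t x) ≤ 1 :=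
      mul_le_one₀ h1 (sub_nonneg.2 h1) (sub_le_self 1 h0)
    rw [← norm_deriv_eq_norm_fderiv, (hasDerivAt_smoothStep k t x).deriv, norm_mul, norm_neg,
      norm_pow, norm_natCast, norm_of_nonneg (mul_nonneg h0 (sub_nonneg.2 h1))]
    exact mul_le_of_le_one_right (by positivity) hprod

lemma bddDifferentiable_deriv_smoothStep (k : ℕ) (t : ℝ) :
    BddDifferentiable (deriv (smoothStep k t)) := by
  rw [funext fun x ↦ (hasDerivAt_smoothStep k t x).deriv]
  have hstep := bddDifferentiable_smoothStep k t
  exact (BddDifferentiable.const _).mul (hstep.mul ((BddDifferentiable.const 1).sub hstep))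

end SmoothStep

section Slepian

variable {ι : Type*}

lemma tendsto_prod_smoothStep [Fintype ι] (t x : ι → ℝ) :
    Tendsto (fun k ↦ ∏ i, smoothStep k (t i) (x i)) atTop (𝓝 ((Set.Iic t).indicator 1 x)) := by
  convert tendsto_finsetProd Finset.univ fun i _ ↦ tendsto_smoothStep (t i) (x i) using 2
  by_cases hx : x ≤ t
  · simp [Set.indicator_of_mem (Set.mem_Iic.2 hx), Set.indicator_of_mem (Set.mem_Iic.2 (hx _))]
  · obtain ⟨i, hi⟩ := not_forall.1 hx
    rw [Set.indicator_of_notMem (by simpa using hx)]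
    exact (Finset.prod_eq_zero (Finset.mem_univ i)
      (Set.indicator_of_notMem (s := Set.Iic (t i)) hi _)).symm

lemma tendsto_integral_prod_smoothStep [Fintype ι] (μ : Measure (ι → ℝ)) [IsFiniteMeasure μ]
    (t : ι → ℝ) :
    Tendsto (fun k ↦ ∫ x, ∏ i, smoothStep k (t i) (x i) ∂μ) atTop (𝓝 (μ.real (Set.Iic t))) := by
  rw [← integral_indicator_one measurableSet_Iic]
  refine tendsto_integral_of_dominated_convergence (fun _ ↦ 1) (fun k ↦ ?_) (integrable_const 1)
    (fun k ↦ .of_forall fun x ↦ ?_) (.of_forall fun x ↦ tendsto_prod_smoothStep t x)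
  · exact (BddDifferentiable.prod_eval fun i ↦
      bddDifferentiable_smoothStep k (t i)).differentiable.continuous.aestronglyMeasurable
  · rw [norm_of_nonneg (Finset.prod_nonneg fun i _ ↦ smoothStep_nonneg _ _ _)]
    exact Finset.prod_le_one (fun i _ ↦ smoothStep_nonneg _ _ _) fun i _ ↦ smoothStep_le_one _ _ _

theorem slepian_measure_Iic_le [Finite ι] {μ ν : Measure (ι → ℝ)} [IsGaussian μ] [IsGaussian ν]
    (hμ : ∀ i, ∫ x, x i ∂μ = 0) (hν : ∀ i, ∫ x, x i ∂ν = 0)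
    (hdiag : ∀ i, coordCov μ i i = coordCov ν i i)
    (hoff : ∀ i j, i ≠ j → coordCov μ i j ≤ coordCov ν i j) (t : ι → ℝ) :
    μ (Set.Iic t) ≤ ν (Set.Iic t) := by
  have := Fintype.ofFinite ι
  have hreal : μ.real (Set.Iic t) ≤ ν.real (Set.Iic t) :=
    le_of_tendsto_of_tendsto' (tendsto_integral_prod_smoothStep μ t)
      (tendsto_integral_prod_smoothStep ν t) fun k ↦
        integral_prod_eval_le_of_coordCov_le hμ hν hdiag hoff
          (fun i ↦ bddDifferentiable_smoothStep k (t i))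
          (fun i ↦ bddDifferentiable_deriv_smoothStep k (t i))
          (fun i ↦ smoothStep_nonneg k (t i)) fun i ↦ smoothStep_antitone k (t i)
  exact (ENNReal.toReal_le_toReal (measure_ne_top _ _) (measure_ne_top _ _)).1 hreal

end Slepian

section Equicorrelated

variable {ι : Type*} [Fintype ι]

lemma hasGaussianLaw_eval_pi_gaussianReal (i : ι) :
    HasGaussianLaw (fun x : ι → ℝ ↦ x i) (Measure.pi fun _ : ι ↦ gaussianReal 0 1) :=
  ⟨by
    rw [show (fun x : ι → ℝ ↦ x i) = Function.eval i from rfl,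
      (measurePreserving_eval (fun _ : ι ↦ gaussianReal 0 1) i).map_eq]
    infer_instance⟩

lemma iIndepFun_eval_pi_gaussianReal :
    iIndepFun (fun (i : ι) (x : ι → ℝ) ↦ x i) (Measure.pi fun _ : ι ↦ gaussianReal 0 1) :=
  iIndepFun_pi (X := fun _ ↦ id) fun _ ↦ aemeasurable_id

instance isGaussian_pi_gaussianReal : IsGaussian (Measure.pi fun _ : ι ↦ gaussianReal 0 1) := by
  simpa using (iIndepFun.hasGaussianLaw hasGaussianLaw_eval_pi_gaussianReal
    iIndepFun_eval_pi_gaussianReal).isGaussian_map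

lemma coordCov_pi_gaussianReal [DecidableEq ι] (i j : ι) :
    coordCov (Measure.pi fun _ : ι ↦ gaussianReal 0 1) i j = if i = j then 1 else 0 := by
  have hmem := memLp_two_eval_of_isGaussian (Measure.pi fun _ : ι ↦ gaussianReal 0 1)
  split_ifs with hij
  · subst hij
    have hcov := covariance_comp_measurePreserving (X := id) (Y := id)
      (measurePreserving_eval (fun _ : ι ↦ gaussianReal 0 1) i) aestronglyMeasurable_id
      aestronglyMeasurable_id
    rwa [covariance_self aemeasurable_id, variance_id_gaussianReal, NNReal.coe_one] at hcov
  · exact (iIndepFun_eval_pi_gaussianReal.indepFun hij).covariance_eq_zero (hmem i) (hmem j)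

/-- The law of the vector `(s Z + c Gᵢ)ᵢ`, where `Z` and the `Gᵢ` are independent standard
Gaussians: a Gaussian measure whose covariance matrix has diagonal entries `s² + c²` and all other
entries `s²`. -/
noncomputable def equicorrelatedGaussian (ι : Type*) [Fintype ι] (s c : ℝ) : Measure (ι → ℝ) :=
  ((gaussianReal 0 1).prod (Measure.pi fun _ : ι ↦ gaussianReal 0 1)).map
    fun p i ↦ s * p.1 + c * p.2 i

instance isGaussian_equicorrelatedGaussian (s c : ℝ) :
    IsGaussian (equicorrelatedGaussian ι s c) := by
  let L : ℝ × (ι → ℝ) →L[ℝ] ι → ℝ := ContinuousLinearMap.pi fun i ↦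
    s • ContinuousLinearMap.fst ℝ ℝ (ι → ℝ) +
      c • (ContinuousLinearMap.proj (R := ℝ) (φ := fun _ ↦ ℝ) i).comp
        (ContinuousLinearMap.snd ℝ ℝ (ι → ℝ))
  exact (IsGaussian.hasGaussianLaw_id.map_fun L).isGaussian_map

lemma integral_eval_equicorrelatedGaussian (s c : ℝ) (i : ι) :
    ∫ x, x i ∂equicorrelatedGaussian ι s c = 0 := by
  have hG : ∫ x, x i ∂Measure.pi (fun _ : ι ↦ gaussianReal 0 1) = 0 := by
    rw [integral_comp_eval (μ := fun _ : ι ↦ gaussianReal 0 1) (f := fun z : ℝ ↦ z) (by fun_prop),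
      integral_id_gaussianReal]
  have hint : Integrable (fun x : ι → ℝ ↦ x i) (Measure.pi fun _ : ι ↦ gaussianReal 0 1) :=
    (memLp_two_eval_of_isGaussian _ i).integrable one_le_two
  have hZint : Integrable (fun z : ℝ ↦ z) (gaussianReal 0 1) :=
    (memLp_id_gaussianReal 2).integrable one_le_two
  rw [equicorrelatedGaussian, integral_map (f := fun x : ι → ℝ ↦ x i) (by fun_prop)
      (measurable_pi_apply i).aestronglyMeasurable,
    integral_add ((hZint.comp_fst _).const_mul s) ((hint.comp_snd _).const_mul c),
    integral_const_mul, integral_const_mul, integral_fun_fst (f := fun z : ℝ ↦ z),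
    integral_fun_snd (f := fun x : ι → ℝ ↦ x i), integral_id_gaussianReal, hG]
  simp

lemma coordCov_equicorrelatedGaussian [DecidableEq ι] (s c : ℝ) (i j : ι) :
    coordCov (equicorrelatedGaussian ι s c) i j = s ^ 2 + if i = j then c ^ 2 else 0 := by
  have hmem := memLp_two_eval_of_isGaussian (Measure.pi fun _ : ι ↦ gaussianReal 0 1)
  rw [coordCov, equicorrelatedGaussian, covariance_map_fun
      (measurable_pi_apply i).aestronglyMeasurable (measurable_pi_apply j).aestronglyMeasurable
      (by fun_prop)]
  have hcov := covariance_prod_const_mul_add (μ := gaussianReal 0 1) (X := id) (X' := id)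
    (Y := fun x : ι → ℝ ↦ x i) (Y' := fun x : ι → ℝ ↦ x j) (memLp_id_gaussianReal 2)
    (memLp_id_gaussianReal 2) (hmem i) (hmem j) s c s c
  rw [covariance_self aemeasurable_id, variance_id_gaussianReal, ← coordCov,
    coordCov_pi_gaussianReal] at hcov
  refine hcov.trans ?_
  split_ifs <;> simp [sq]

lemma gaussianReal_map_const_sub_const_mul (m r : ℝ) :
    (gaussianReal 0 1).map (fun z ↦ m - r * z) = gaussianReal m (r ^ 2).toNNReal := by
  have hcomp : (fun z ↦ m - r * z) = (fun y ↦ m - y) ∘ fun z ↦ r * z := rfl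
  rw [hcomp, ← Measure.map_map (by fun_prop) (by fun_prop), gaussianReal_map_const_mul,
    gaussianReal_map_const_sub, mul_zero, sub_zero, mul_one, Real.toNNReal_of_nonneg (sq_nonneg r)]

lemma measurable_gaussianReal_Iic_pow (k : ℕ) :
    Measurable fun u ↦ (gaussianReal 0 1).real (Set.Iic u) ^ k :=
  (Monotone.measurable fun _ _ h ↦ measureReal_mono (Set.Iic_subset_Iic.2 h)).pow_const k

lemma equicorrelatedGaussian_Iic (s : ℝ) {c : ℝ} (hc : 0 < c) (m : ℝ) :
    equicorrelatedGaussian ι s c (Set.Iic fun _ ↦ c * m) =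
      ∫⁻ u, ENNReal.ofReal ((gaussianReal 0 1).real (Set.Iic u) ^ Fintype.card ι)
        ∂gaussianReal m ((s / c) ^ 2).toNNReal := by
  have hfiber (z : ℝ) : {x : ι → ℝ | (fun i ↦ s * z + c * x i) ≤ fun _ ↦ c * m} =
      Set.univ.pi fun _ ↦ Set.Iic (m - s / c * z) := by
    ext x
    simp only [Set.mem_ofPred_eq, Pi.le_def, Set.mem_univ_pi, Set.mem_Iic]
    refine forall_congr' fun i ↦ ?_
    rw [le_sub_iff_add_le, ← mul_le_mul_iff_right₀ (b := x i + s / c * z) hc]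
    field_simp
    rw [add_comm]
  have hmeas : Measurable fun (p : ℝ × (ι → ℝ)) (i : ι) ↦ s * p.1 + c * p.2 i := by fun_prop
  rw [equicorrelatedGaussian, Measure.map_apply hmeas measurableSet_Iic,
    Measure.prod_apply (hmeas measurableSet_Iic), ← gaussianReal_map_const_sub_const_mul,
    lintegral_map (measurable_gaussianReal_Iic_pow _).ennreal_ofReal (by fun_prop)]
  refine lintegral_congr fun z ↦ ?_
  change Measure.pi _ {x : ι → ℝ | (fun i ↦ s * z + c * x i) ≤ fun _ ↦ c * m} = _
  rw [hfiber, Measure.pi_pi, Finset.prod_const, Finset.card_univ,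
    ENNReal.ofReal_pow measureReal_nonneg, ofReal_measureReal]

end Equicorrelated

namespace IsCenteredGaussianVec

variable {Ω : Type*} [MeasureSpace Ω] {n : ℕ} {X : Fin n → Ω → ℝ} {R : Matrix (Fin n) (Fin n) ℝ}

lemma measurable (h : IsCenteredGaussianVec X R) : Measurable fun ω i ↦ X i ω :=
  measurable_pi_lambda _ h.1

lemma hasGaussianLaw (h : IsCenteredGaussianVec X R) :
    HasGaussianLaw (fun ω i ↦ X i ω) (ℙ : Measure Ω) where
  isGaussian_map := by
    refine isGaussian_of_map_eq_gaussianReal fun L ↦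
      ⟨0, (∑ i, ∑ j, L (Pi.single i 1) * R i j * L (Pi.single j 1)).toNNReal, ?_⟩
    rw [Measure.map_map (by fun_prop) h.measurable, ← h.2.2 fun i ↦ L (Pi.single i 1)]
    congr 1
    ext ω
    exact (apply_eq_sum_mul_apply_single L _).trans (Finset.sum_congr rfl fun i _ ↦ mul_comm _ _)

lemma map_eval (h : IsCenteredGaussianVec X R) (i : Fin n) :
    Measure.map (X i) (ℙ : Measure Ω) = gaussianReal 0 1 := by
  simpa [Pi.single_apply, h.2.1 i] using h.2.2 (Pi.single i 1)

lemma map_add_eval (h : IsCenteredGaussianVec X R) (i j : Fin n) :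
    Measure.map (X i + X j) (ℙ : Measure Ω) =
      gaussianReal 0 (2 + R i j + R j i).toNNReal := by
  have hlaw := h.2.2 (Pi.single i 1 + Pi.single j 1)
  have hvar : ∑ k, ∑ l, (Pi.single i 1 + Pi.single j 1 : Fin n → ℝ) k * R k l *
      (Pi.single i 1 + Pi.single j 1 : Fin n → ℝ) l = 2 + R i j + R j i := by
    simp only [Pi.add_apply, Pi.single_apply, add_mul, ite_mul, one_mul, zero_mul, mul_add, mul_ite,
      mul_one, mul_zero, Finset.sum_add_distrib, Finset.sum_ite_eq', Finset.mem_univ, ↓reduceIte,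
      h.2.1]
    ring
  rw [hvar] at hlaw
  rw [← hlaw]
  congr 1
  ext ω
  simp [Pi.single_apply, add_mul, Finset.sum_add_distrib]

lemma integral_eq_zero (h : IsCenteredGaussianVec X R) (i : Fin n) : ∫ ω, X i ω = 0 := by
  have hmap := integral_map (μ := ℙ) (f := fun x : ℝ ↦ x) (h.1 i).aemeasurable (by fun_prop)
  rw [← hmap, h.map_eval, integral_id_gaussianReal]

lemma variance_eq_one (h : IsCenteredGaussianVec X R) (i : Fin n) : Var[X i; ℙ] = 1 := by
  rw [← Function.id_comp (X i), ← variance_map aemeasurable_id (h.1 i).aemeasurable, h.map_eval,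
    variance_id_gaussianReal, NNReal.coe_one]

-- The definition constrains `R` only through its quadratic form truncated at `0`: hence the
-- symmetrization and the `max`.
lemma covariance_eq (h : IsCenteredGaussianVec X R) (i j : Fin n) :
    cov[X i, X j; ℙ] = max ((R i j + R j i) / 2) (-1) := by
  have hgauss := h.hasGaussianLaw
  have := hgauss.isProbabilityMeasure
  have hsum : Var[X i + X j; ℙ] = max (2 + R i j + R j i) 0 := by
    rw [← Function.id_comp (X i + X j), ← variance_map aemeasurable_id
      ((h.1 i).add (h.1 j)).aemeasurable, h.map_add_eval, variance_id_gaussianReal,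
      Real.coe_toNNReal']
  rw [variance_add (hgauss.eval i).memLp_two (hgauss.eval j).memLp_two, h.variance_eq_one,
    h.variance_eq_one] at hsum
  rcases max_cases (2 + R i j + R j i) 0 with hmax | hmax <;>
    rcases max_cases ((R i j + R j i) / 2) (-1) with hmax' | hmax' <;> linarith

lemma coordCov_map (h : IsCenteredGaussianVec X R) (i j : Fin n) :
    coordCov (Measure.map (fun ω i ↦ X i ω) (ℙ : Measure Ω)) i j = cov[X i, X j; ℙ] :=
  covariance_map_fun (measurable_pi_apply i).aestronglyMeasurable
    (measurable_pi_apply j).aestronglyMeasurable h.measurable.aemeasurable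

theorem measure_forall_le_le_equicorrelatedGaussian (h : IsCenteredGaussianVec X R) {ρ : ℝ}
    (hρ : ρ ∈ Set.Icc 0 1) (hR : ∀ i j, i ≠ j → R i j ≤ ρ) (t : ℝ) :
    ℙ {ω | ∀ i, X i ω ≤ t} ≤ equicorrelatedGaussian (Fin n) √ρ √(1 - ρ) (Set.Iic fun _ ↦ t) := by
  have := h.hasGaussianLaw.isGaussian_map
  have hsq : √ρ ^ 2 = ρ := sq_sqrt hρ.1
  have hsq' : √(1 - ρ) ^ 2 = 1 - ρ := sq_sqrt (sub_nonneg.2 hρ.2)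
  calc ℙ {ω | ∀ i, X i ω ≤ t} = Measure.map (fun ω i ↦ X i ω) ℙ (Set.Iic fun _ ↦ t) :=
        (Measure.map_apply h.measurable measurableSet_Iic).symm
    _ ≤ equicorrelatedGaussian (Fin n) √ρ √(1 - ρ) (Set.Iic fun _ ↦ t) := by
        refine slepian_measure_Iic_le (fun i ↦ ?_)
          (integral_eval_equicorrelatedGaussian (√ρ) √(1 - ρ)) (fun i ↦ ?_) (fun i j hij ↦ ?_) _
        · exact (integral_map h.measurable.aemeasurable
            (measurable_pi_apply i).aestronglyMeasurable).trans (h.integral_eq_zero i)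
        · rw [h.coordCov_map, covariance_self (h.1 i).aemeasurable, h.variance_eq_one,
            coordCov_equicorrelatedGaussian, if_pos rfl, hsq, hsq', add_sub_cancel]
        · rw [h.coordCov_map, h.covariance_eq, coordCov_equicorrelatedGaussian, if_neg hij, hsq,
            add_zero]
          have := hR i j hij
          have := hR j i hij.symm
          exact max_le (by linarith) (by linarith [hρ.1])

end IsCenteredGaussianVec

section LowerTail

lemma exp_mul_gaussianPDFReal_le {a u x : ℝ} (ha : 1 ≤ a) (hu : u ≤ a)
    (hx : x ∈ Set.Ioc u (u + a⁻¹)) :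
    exp (-3 / 2) * gaussianPDFReal 0 1 u ≤ gaussianPDFReal 0 1 x := by
  obtain ⟨h, rfl⟩ : ∃ h, x = u + h := ⟨x - u, by ring⟩
  have hpos : 0 < h := by linarith [hx.1]
  have hmul : h * a ≤ 1 := (le_div_iff₀ (by linarith)).1 (by linarith [hx.2, one_div a])
  simp only [gaussianPDFReal, NNReal.coe_one, mul_one, sub_zero]
  rw [mul_left_comm, ← exp_add]
  gcongr
  nlinarith [mul_le_mul_of_nonneg_left hu hpos.le, show h ≤ 1 by nlinarith]

lemma gaussianPDFReal_div_le_gaussianReal_Ioi {a u : ℝ} (ha : 1 ≤ a) (hu : u ≤ a) :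
    exp (-3 / 2) * gaussianPDFReal 0 1 u / a ≤ (gaussianReal 0 1).real (Set.Ioi u) := by
  have hvol : volume.real (Set.Ioc u (u + a⁻¹)) = a⁻¹ := by
    rw [measureReal_def, Real.volume_Ioc, add_sub_cancel_left,
      ENNReal.toReal_ofReal (by positivity)]
  calc exp (-3 / 2) * gaussianPDFReal 0 1 u / a
      = exp (-3 / 2) * gaussianPDFReal 0 1 u * volume.real (Set.Ioc u (u + a⁻¹)) := by
        rw [hvol, div_eq_mul_inv]
    _ ≤ ∫ x in Set.Ioc u (u + a⁻¹), gaussianPDFReal 0 1 x :=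
        setIntegral_ge_of_const_le_real measurableSet_Ioc (by simp)
          (fun x hx ↦ exp_mul_gaussianPDFReal_le ha hu hx)
          (integrable_gaussianPDFReal 0 1).integrableOn
    _ = (gaussianReal 0 1).real (Set.Ioc u (u + a⁻¹)) := by
        rw [measureReal_def, gaussianReal_apply_eq_integral 0 one_ne_zero, ENNReal.toReal_ofReal
          (setIntegral_nonneg measurableSet_Ioc fun x _ ↦ gaussianPDFReal_nonneg _ _ _)]
    _ ≤ (gaussianReal 0 1).real (Set.Ioi u) := measureReal_mono Set.Ioc_subset_Ioi_self

lemma gaussianReal_Iic_le_exp {a u : ℝ} (ha : 1 ≤ a) (hu : u ≤ a) :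
    (gaussianReal 0 1).real (Set.Iic u) ≤ exp (-(exp (-3 / 2) * gaussianPDFReal 0 1 u / a)) := by
  have hcompl := probReal_compl_eq_one_sub (μ := gaussianReal 0 1) (measurableSet_Iic (a := u))
  rw [Set.compl_Iic] at hcompl
  linarith [gaussianPDFReal_div_le_gaussianReal_Ioi ha hu,
    add_one_le_exp (-(exp (-3 / 2) * gaussianPDFReal 0 1 u / a))]

lemma exp_neg_le_div_rpow {m x : ℝ} (hm : 0 < m) (hx : 0 < x) : exp (-x) ≤ (m / x) ^ m := by
  rw [← inv_div, inv_rpow (by positivity), exp_neg]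
  refine inv_anti₀ (by positivity) ?_
  calc (x / m) ^ m ≤ exp (x / m) ^ m :=
        rpow_le_rpow (by positivity) (by linarith [add_one_le_exp (x / m)]) hm.le
    _ = exp x := by rw [← exp_mul, div_mul_cancel₀ _ hm.ne']

lemma gaussianReal_Iic_pow_le {m a u : ℝ} {n : ℕ} (hm : 0 < m) (ha : 1 ≤ a) (hu : u ≤ a)
    (hn : exp (a ^ 2 / 2) ≤ n) :
    (gaussianReal 0 1).real (Set.Iic u) ^ n ≤
      (m * exp (3 / 2) * √(2 * π)) ^ m * a ^ m * exp (m * (u ^ 2 - a ^ 2) / 2) := by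
  have ha' : 0 < a := by linarith
  have hpdf := gaussianPDFReal_pos 0 1 u one_ne_zero
  have hbase : m / (exp (a ^ 2 / 2) * (exp (-3 / 2) * gaussianPDFReal 0 1 u / a)) =
      m * exp (3 / 2) * √(2 * π) * a * exp ((u ^ 2 - a ^ 2) / 2) := by
    simp only [gaussianPDFReal, NNReal.coe_one, mul_one, sub_zero, neg_div, exp_neg, sub_div,
      exp_sub]
    field_simp
  calc (gaussianReal 0 1).real (Set.Iic u) ^ n
      ≤ exp (-(exp (-3 / 2) * gaussianPDFReal 0 1 u / a)) ^ n :=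
        pow_le_pow_left₀ measureReal_nonneg (gaussianReal_Iic_le_exp ha hu) n
    _ = exp (-(n * (exp (-3 / 2) * gaussianPDFReal 0 1 u / a))) := by rw [← exp_nat_mul, mul_neg]
    _ ≤ exp (-(exp (a ^ 2 / 2) * (exp (-3 / 2) * gaussianPDFReal 0 1 u / a))) := by gcongr
    _ ≤ (m * exp (3 / 2) * √(2 * π) * a * exp ((u ^ 2 - a ^ 2) / 2)) ^ m :=
        hbase ▸ exp_neg_le_div_rpow hm (by positivity)
    _ = (m * exp (3 / 2) * √(2 * π)) ^ m * a ^ m * exp (m * (u ^ 2 - a ^ 2) / 2) := by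
        rw [mul_rpow (by positivity) (by positivity), mul_rpow (by positivity) ha'.le, ← exp_mul]
        ring_nf

-- The two sides differ by the factor `exp (-(1 - m v) (u - a) ^ 2 / (2 v))`.
lemma gaussianPDFReal_mul_exp_le {μ m : ℝ} {v : ℝ≥0} (hv : v ≠ 0) (hm : m * v ≤ 1) (a u : ℝ) :
    gaussianPDFReal μ v u * exp (m * (u ^ 2 - a ^ 2) / 2) ≤
      gaussianPDFReal μ v a * exp ((m * a - (a - μ) / v) * (u - a)) := by
  have hsquare : -(a - μ) ^ 2 / (2 * v) + (m * a - (a - μ) / v) * (u - a) -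
      (-(u - μ) ^ 2 / (2 * v) + m * (u ^ 2 - a ^ 2) / 2) =
        (1 - m * v) * (u - a) ^ 2 / (2 * v) := by
    field_simp
    ring
  have hnonneg : 0 ≤ (1 - m * v) * (u - a) ^ 2 / (2 * v) := by
    have := sub_nonneg.2 hm
    positivity
  simp only [gaussianPDFReal, mul_assoc _ (exp _), ← exp_add]
  exact mul_le_mul_of_nonneg_left (exp_le_exp.2 (by linarith)) (by positivity)

lemma setLIntegral_gaussianReal_le {μ : ℝ} {v : ℝ≥0} (hv : v ≠ 0) {S : Set ℝ}
    (hS : MeasurableSet S) {F g : ℝ → ℝ} (hF : Measurable F) (hF' : ∀ u, 0 ≤ F u)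
    (hg : IntegrableOn g S) (hFg : ∀ u ∈ S, gaussianPDFReal μ v u * F u ≤ g u) :
    ∫⁻ u in S, ENNReal.ofReal (F u) ∂gaussianReal μ v ≤ ENNReal.ofReal (∫ u in S, g u) := by
  have hg' : ∀ u ∈ S, 0 ≤ g u := fun u hu ↦
    (mul_nonneg (gaussianPDFReal_nonneg μ v u) (hF' u)).trans (hFg u hu)
  rw [ofReal_integral_eq_lintegral_ofReal hg ((ae_restrict_iff' hS).2 (.of_forall hg')),
    gaussianReal_of_var_ne_zero _ hv, setLIntegral_withDensity_eq_setLIntegral_mul _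
      (measurable_gaussianPDF _ _) hF.ennreal_ofReal hS]
  refine setLIntegral_mono' hS fun u hu ↦ ?_
  rw [Pi.mul_apply, gaussianPDF, ← ENNReal.ofReal_mul (gaussianPDFReal_nonneg μ v u)]
  exact ENNReal.ofReal_le_ofReal (hFg u hu)

lemma integrableOn_exp_mul_sub_Iic {k : ℝ} (hk : 0 < k) (a c : ℝ) :
    IntegrableOn (fun u ↦ exp (k * (u - a))) (Set.Iic c) := by
  simp only [mul_sub, exp_sub]
  exact (integrableOn_exp_mul_Iic hk c).div_const _

lemma integral_exp_mul_sub_Iic {k : ℝ} (hk : 0 < k) (a c : ℝ) :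
    ∫ u in Set.Iic c, exp (k * (u - a)) = exp (k * (c - a)) / k := by
  simp only [mul_sub, exp_sub, integral_div, integral_exp_mul_Iic hk]
  ring

lemma integrableOn_exp_mul_sub_Ioi {k : ℝ} (hk : k < 0) (a c : ℝ) :
    IntegrableOn (fun u ↦ exp (k * (u - a))) (Set.Ioi c) := by
  simp only [mul_sub, exp_sub]
  exact (integrableOn_exp_mul_Ioi hk c).div_const _

lemma integral_exp_mul_sub_Ioi {k : ℝ} (hk : k < 0) (a c : ℝ) :
    ∫ u in Set.Ioi c, exp (k * (u - a)) = -exp (k * (c - a)) / k := by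
  simp only [mul_sub, exp_sub, integral_div, integral_exp_mul_Ioi hk]
  ring

lemma exp_mul_sub_log_div_sub {a : ℝ} (ha : 0 < a) (k : ℝ) :
    exp (k * a * (a - log a / a - a)) = a ^ (-k) := by
  rw [rpow_def_of_pos ha]
  congr 1
  field_simp
  ring

-- Cutting at `a - log a / a` gives the exponential bounds on the two sides the same order in `a`.
lemma setLIntegral_Iic_gaussianReal_Iic_pow_le {δ m a : ℝ} {v : ℝ≥0} {n : ℕ} (hv : v ≠ 0)
    (hm : 0 < m) (hmv : m * v ≤ 1) (hδm : (1 - δ) / v < m) (ha : 1 ≤ a)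
    (hn : exp (a ^ 2 / 2) ≤ n) :
    ∫⁻ u in Set.Iic (a - log a / a), ENNReal.ofReal ((gaussianReal 0 1).real (Set.Iic u) ^ n)
        ∂gaussianReal (δ * a) v ≤
      ENNReal.ofReal ((m * exp (3 / 2) * √(2 * π)) ^ m / (m - (1 - δ) / v) *
        gaussianPDFReal (δ * a) v a * a ^ ((1 - δ) / v - 1)) := by
  set β := (1 - δ) / (v : ℝ) with hβ
  set K := (m * exp (3 / 2) * √(2 * π)) ^ m
  have ha' : 0 < a := by linarith
  have hrate : 0 < (m - β) * a := mul_pos (sub_pos.2 hδm) ha'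
  have hcut : a - log a / a ≤ a := sub_le_self _ (div_nonneg (log_nonneg ha) ha'.le)
  have hpoint (u : ℝ) (hu : u ∈ Set.Iic (a - log a / a)) :
      gaussianPDFReal (δ * a) v u * (gaussianReal 0 1).real (Set.Iic u) ^ n ≤
        K * a ^ m * gaussianPDFReal (δ * a) v a * exp ((m - β) * a * (u - a)) := by
    have hpow := gaussianReal_Iic_pow_le hm ha (le_trans hu hcut) hn
    have hpdf := gaussianPDFReal_mul_exp_le (μ := δ * a) hv hmv a u
    rw [show m * a - (a - δ * a) / v = (m - β) * a by rw [hβ]; ring] at hpdf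
    calc _ ≤ gaussianPDFReal (δ * a) v u * (K * a ^ m * exp (m * (u ^ 2 - a ^ 2) / 2)) :=
          mul_le_mul_of_nonneg_left hpow (gaussianPDFReal_nonneg _ _ _)
      _ = K * a ^ m * (gaussianPDFReal (δ * a) v u * exp (m * (u ^ 2 - a ^ 2) / 2)) := by ring
      _ ≤ K * a ^ m * (gaussianPDFReal (δ * a) v a * exp ((m - β) * a * (u - a))) := by gcongr
      _ = _ := by ring
  refine (setLIntegral_gaussianReal_le hv measurableSet_Iic (measurable_gaussianReal_Iic_pow n)
    (fun u ↦ by positivity) ((integrableOn_exp_mul_sub_Iic hrate _ _).const_mul _)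
    hpoint).trans_eq ?_
  rw [integral_const_mul, integral_exp_mul_sub_Iic hrate, exp_mul_sub_log_div_sub ha',
    show β - 1 = m + -(m - β) - 1 by ring, rpow_sub_one ha'.ne', rpow_add ha']
  congr 1
  field_simp

lemma setLIntegral_Ioi_gaussianReal_Iic_pow_le {δ a : ℝ} {v : ℝ≥0} (n : ℕ) (hv : v ≠ 0)
    (hδ : δ < 1) (ha : 0 < a) :
    ∫⁻ u in Set.Ioi (a - log a / a), ENNReal.ofReal ((gaussianReal 0 1).real (Set.Iic u) ^ n)
        ∂gaussianReal (δ * a) v ≤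
      ENNReal.ofReal (((1 - δ) / v)⁻¹ * gaussianPDFReal (δ * a) v a * a ^ ((1 - δ) / v - 1)) := by
  set β := (1 - δ) / (v : ℝ) with hβ
  have hβ' : 0 < β := div_pos (sub_pos.2 hδ) (by positivity)
  have hrate : -β * a < 0 := mul_neg_of_neg_of_pos (neg_lt_zero.2 hβ') ha
  have hpoint (u : ℝ) : gaussianPDFReal (δ * a) v u * (gaussianReal 0 1).real (Set.Iic u) ^ n ≤
        gaussianPDFReal (δ * a) v a * exp (-β * a * (u - a)) := by
    have hpdf := gaussianPDFReal_mul_exp_le (μ := δ * a) (m := 0) hv (by simp) a u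
    rw [show 0 * a - (a - δ * a) / v = -β * a by rw [hβ]; ring] at hpdf
    calc _ ≤ gaussianPDFReal (δ * a) v u :=
          mul_le_of_le_one_right (gaussianPDFReal_nonneg _ _ _)
            (pow_le_one₀ measureReal_nonneg measureReal_le_one)
      _ ≤ _ := by simpa using hpdf
  refine (setLIntegral_gaussianReal_le hv measurableSet_Ioi (measurable_gaussianReal_Iic_pow n)
    (fun u ↦ by positivity) ((integrableOn_exp_mul_sub_Ioi hrate _ _).const_mul _)
    fun u _ ↦ hpoint u).trans_eq ?_
  rw [integral_const_mul, integral_exp_mul_sub_Ioi hrate, exp_mul_sub_log_div_sub ha, neg_neg,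
    rpow_sub_one ha.ne']
  congr 1
  field_simp

theorem exists_lintegral_gaussianReal_Iic_pow_le {δ : ℝ} {v : ℝ≥0} (hδ : δ ∈ Set.Ioo 0 1)
    (hv : v ≠ 0) :
    ∃ C : ℝ, 0 < C ∧ ∀ (a : ℝ) (n : ℕ), 1 ≤ a → exp (a ^ 2 / 2) ≤ n →
      ∫⁻ u, ENNReal.ofReal ((gaussianReal 0 1).real (Set.Iic u) ^ n) ∂gaussianReal (δ * a) v ≤
        ENNReal.ofReal (C * exp (a ^ 2 / 2) ^ (-((1 - δ) ^ 2 / v)) * a ^ ((1 - δ) / v - 1)) := by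
  have hv' : (0 : ℝ) < v := by positivity
  have hβ : 0 < (1 - δ) / v := div_pos (sub_pos.2 hδ.2) hv'
  obtain ⟨m, hδm, hmv⟩ : ∃ m : ℝ, (1 - δ) / v < m ∧ m < 1 / v :=
    exists_between (div_lt_div_of_pos_right (by linarith [hδ.1]) hv')
  have hm : 0 < m := hβ.trans hδm
  have : 0 < m - (1 - δ) / v := sub_pos.2 hδm
  have hpdf (a : ℝ) : gaussianPDFReal (δ * a) v a =
      (√(2 * π * v))⁻¹ * exp (a ^ 2 / 2) ^ (-((1 - δ) ^ 2 / v)) := by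
    rw [gaussianPDFReal, ← exp_mul]
    congr 2
    ring
  refine ⟨((m * exp (3 / 2) * √(2 * π)) ^ m / (m - (1 - δ) / v) + ((1 - δ) / v)⁻¹) *
    (√(2 * π * v))⁻¹, by positivity, fun a n ha hn ↦ ?_⟩
  have ha' : 0 < a := by linarith
  rw [← lintegral_add_compl _ (measurableSet_Iic (a := a - log a / a)), Set.compl_Iic]
  refine (add_le_add (setLIntegral_Iic_gaussianReal_Iic_pow_le hv hm
    ((lt_div_iff₀ hv').1 hmv).le hδm ha hn)
    (setLIntegral_Ioi_gaussianReal_Iic_pow_le n hv hδ.2 ha')).trans_eq ?_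
  rw [hpdf, ← ENNReal.ofReal_add (by positivity) (by positivity)]
  congr 1
  ring

lemma exists_lintegral_gaussianReal_Iic_pow_le_rpow_log {δ : ℝ} {v : ℝ≥0} (hδ : δ ∈ Set.Ioo 0 1)
    (hv : v ≠ 0) :
    ∃ C : ℝ, 0 < C ∧ ∀ n : ℕ, 2 ≤ n →
      ∫⁻ u, ENNReal.ofReal ((gaussianReal 0 1).real (Set.Iic u) ^ n)
          ∂gaussianReal (δ * √(2 * log n)) v ≤
        ENNReal.ofReal (C * (n : ℝ) ^ (-((1 - δ) ^ 2 / v)) * log n ^ (((1 - δ) / v - 1) / 2)) := by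
  obtain ⟨C, hC, hbound⟩ := exists_lintegral_gaussianReal_Iic_pow_le hδ hv
  refine ⟨C * 2 ^ (((1 - δ) / v - 1) / 2), by positivity, fun n hn ↦ ?_⟩
  have hn' : (2 : ℝ) ≤ n := by exact_mod_cast hn
  have hlog : 1 ≤ 2 * log n := by linarith [log_two_gt_d9, log_le_log two_pos hn']
  have hexp : exp (√(2 * log n) ^ 2 / 2) = n := by
    rw [sq_sqrt (by linarith), mul_div_cancel_left₀ _ two_ne_zero, exp_log (by linarith)]
  refine (hbound _ n (one_le_sqrt.2 hlog) hexp.le).trans_eq ?_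
  rw [hexp, sqrt_eq_rpow, ← rpow_mul (by linarith), one_div_mul_eq_div,
    mul_rpow two_pos.le (by linarith)]
  congr 1
  ring

end LowerTail

lemma exists_equicorrelatedGaussian_Iic_le {δ ρ : ℝ} (hδ : δ ∈ Set.Ioo 0 1)
    (hρ : ρ ∈ Set.Ioo 0 1) :
    ∃ C : ℝ, 0 < C ∧ ∀ n : ℕ, 2 ≤ n →
      equicorrelatedGaussian (Fin n) √ρ √(1 - ρ) (Set.Iic fun _ ↦ δ * √(2 * (1 - ρ) * log n)) ≤
        ENNReal.ofReal (C * (n : ℝ) ^ (-((1 - ρ) * (1 - δ) ^ 2 / ρ)) *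
          log n ^ (((1 - ρ) * (1 - δ) / ρ - 1) / 2)) := by
  have hρ' : 0 < 1 - ρ := sub_pos.2 hρ.2
  have hratio : (((√ρ / √(1 - ρ)) ^ 2).toNNReal : ℝ) = ρ / (1 - ρ) := by
    rw [coe_toNNReal _ (sq_nonneg _), div_pow, sq_sqrt hρ.1.le, sq_sqrt hρ'.le]
  have hratio_ne : ((√ρ / √(1 - ρ)) ^ 2).toNNReal ≠ 0 :=
    NNReal.coe_ne_zero.1 (hratio ▸ (div_pos hρ.1 hρ').ne')
  obtain ⟨C, hC, hbound⟩ := exists_lintegral_gaussianReal_Iic_pow_le_rpow_log hδ hratio_ne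
  refine ⟨C, hC, fun n hn ↦ ?_⟩
  have hlevel : δ * √(2 * (1 - ρ) * log n) = √(1 - ρ) * (δ * √(2 * log n)) := by
    rw [mul_comm 2, mul_assoc, sqrt_mul hρ'.le]
    ring
  have hmixture := hbound n hn
  rw [hratio, div_div_eq_mul_div, div_div_eq_mul_div, mul_comm _ (1 - ρ), mul_comm _ (1 - ρ)]
    at hmixture
  rwa [hlevel, equicorrelatedGaussian_Iic _ (sqrt_pos.2 hρ'), Fintype.card_fin]

theorem sharp_lower_tail_upper_bound (δ₀ ρ₀ : ℝ)
    (hδ : δ₀ ∈ Set.Ioo (0 : ℝ) 1) (hρ : ρ₀ ∈ Set.Ioo (0 : ℝ) 1) :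
    ∃ C : ℝ, 0 < C ∧
      ∀ (Ω : Type) [MeasureSpace Ω], IsProbabilityMeasure (ℙ : Measure Ω) →
        ∀ (n : ℕ), 2 ≤ n →
          ∀ (X : Fin n → Ω → ℝ) (R : Matrix (Fin n) (Fin n) ℝ),
            IsCenteredGaussianVec X R →
            (∀ i j, i ≠ j → R i j ≤ ρ₀) →
            (ℙ : Measure Ω) {ω | (⨆ i, X i ω)
                ≤ δ₀ * Real.sqrt (2 * (1 - ρ₀) * Real.log n)}
              ≤ ENNReal.ofReal
                  (C * (n : ℝ) ^ (-((1 - ρ₀) * (1 - δ₀) ^ 2 / ρ₀))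
                    * Real.log n ^ (((1 - ρ₀) * (1 - δ₀) / ρ₀ - 1) / 2)) := by
  obtain ⟨C, hC, hbound⟩ := exists_equicorrelatedGaussian_Iic_le hδ hρ
  refine ⟨C, hC, fun Ω _ _ n hn X R hX hR ↦ ?_⟩
  set t := δ₀ * √(2 * (1 - ρ₀) * log n)
  calc ℙ {ω | (⨆ i, X i ω) ≤ t}
      ≤ ℙ {ω | ∀ i, X i ω ≤ t} :=
        measure_mono fun ω hω i ↦
          (le_ciSup (f := (X · ω)) (Set.finite_range _).bddAbove i).trans hω
    _ ≤ equicorrelatedGaussian (Fin n) √ρ₀ √(1 - ρ₀) (Set.Iic fun _ ↦ t) :=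
        hX.measure_forall_le_le_equicorrelatedGaussian (Set.Ioo_subset_Icc_self hρ) hR t
    _ ≤ _ := hbound n hn
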